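/- Let C be a class of finite groups closed under taking subgroups. Let F be a free group of rank k with basis x_1, …, x_k and let u, w ∈ F be measure equivalent in every group of C. Then for every group P in C, the number of surjective homomorphisms from the double F *_u F onto P equals the number of surjective homomorphisms from the double F *_w F onto P; in particular, the two doubles have the same quotients among groups in C. -/

import Mathlib

/-- Two words `w, u` of the free group on `α` are *measure equivalent* in a group `Q` if for
every `g : Q` the fibers of the respective word maps `(α → Q) → Q` over `g` have the same
cardinality. -/
def MeasureEquivIn {α : Type*} (w u : FreeGroup α) (Q : Type*) [Group Q] : Prop :=
  ∀ g : Q, Nat.card {f : α → Q // FreeGroup.lift f w = g} =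
    Nat.card {f : α → Q // FreeGroup.lift f u = g}

/-- The relator `u(x₁,…,x_k)·u(x̄₁,…,x̄_k)⁻¹` presenting the double `F *_u F`. -/
def doubleRel {k : ℕ} (u : FreeGroup (Fin k)) : FreeGroup (Fin k ⊕ Fin k) :=
  FreeGroup.map Sum.inl u * (FreeGroup.map Sum.inr u)⁻¹

/-- The double `F *_u F` of the free group `F` of rank `k` along the word `u`. -/
def Double {k : ℕ} (u : FreeGroup (Fin k)) : Type :=
  PresentedGroup ({doubleRel u} : Set (FreeGroup (Fin k ⊕ Fin k)))

noncomputable instance {k : ℕ} (u : FreeGroup (Fin k)) : Group (Double u) := by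
  unfold Double; infer_instance

lemma sum_Iic_inj {ι : Type} [Fintype ι] [PartialOrder ι] (a b : ι → ℕ)
    (h : ∀ H : ι, (open Classical in ∑ K ∈ Finset.univ.filter (· ≤ H), a K) =
      (open Classical in ∑ K ∈ Finset.univ.filter (· ≤ H), b K)) (H : ι) : a H = b H := by
  classical
  induction H using (wellFounded_lt (α := ι)).induction with
  | _ H ih =>
  have h1 := h H
  have e : Finset.univ.filter (· ≤ H) = insert H (Finset.univ.filter (· < H)) := by
    ext x; simp [le_iff_eq_or_lt]
  rw [e, Finset.sum_insert (by simp), Finset.sum_insert (by simp)] at h1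
  have h2 : ∑ K ∈ Finset.univ.filter (· < H), a K = ∑ K ∈ Finset.univ.filter (· < H), b K :=
    Finset.sum_congr rfl (fun K hK => ih K (by simpa using hK))
  omega

/-- Homs into a subgroup are homs with range in the subgroup. -/
def homSubEquiv {G P : Type} [Group G] [Group P] (H : Subgroup P) :
    (G →* H) ≃ {f : G →* P // f.range ≤ H} where
  toFun f := ⟨H.subtype.comp f, by rintro _ ⟨x, rfl⟩; exact (f x).2⟩
  invFun f := f.1.codRestrict H (fun x => f.2 ⟨x, rfl⟩)
  left_inv f := by ext; rfl
  right_inv f := by ext; rfl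

lemma card_hom_sub {G P : Type} [Group G] [Group P] [Finite (G →* P)] [Fintype (Subgroup P)]
    (H : Subgroup P) : Nat.card (G →* H) =
      open Classical in ∑ K ∈ Finset.univ.filter (· ≤ H), Nat.card {f : G →* P // f.range = K} := by
  classical
  have := Fintype.ofFinite (G →* P)
  rw [Nat.card_congr (homSubEquiv H), Nat.card_eq_fintype_card, Fintype.card_subtype,
    Finset.card_eq_sum_card_fiberwise (f := fun f : G →* P => f.range)
      (t := Finset.univ.filter (· ≤ H)) (by intro f hf; simpa using hf)]
  refine Finset.sum_congr rfl (fun K hK => ?_)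
  rw [Nat.card_eq_fintype_card, Fintype.card_subtype]
  congr 1
  ext f
  simp only [Finset.mem_filter, Finset.mem_univ, true_and] at hK ⊢
  constructor
  · exact fun h => h.2
  · rintro rfl
    exact ⟨hK, rfl⟩

lemma lift_doubleRel {k : ℕ} (u : FreeGroup (Fin k)) {Q : Type} [Group Q]
    (f : Fin k ⊕ Fin k → Q) : FreeGroup.lift f (doubleRel u) =
      FreeGroup.lift (f ∘ Sum.inl) u * (FreeGroup.lift (f ∘ Sum.inr) u)⁻¹ := by
  have h : ∀ g : Fin k → Fin k ⊕ Fin k,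
      FreeGroup.lift f (FreeGroup.map g u) = FreeGroup.lift (f ∘ g) u := by
    intro g
    have : (FreeGroup.lift f).comp (FreeGroup.map g) = FreeGroup.lift (f ∘ g) := by
      ext; simp
    exact DFunLike.congr_fun this u
  simp [doubleRel, h]

noncomputable def doubleHomEquiv {k : ℕ} (u : FreeGroup (Fin k)) (Q : Type) [Group Q] :
    (Double u →* Q) ≃ {p : (Fin k → Q) × (Fin k → Q) //
      FreeGroup.lift p.1 u = FreeGroup.lift p.2 u} where
  toFun φ := ⟨(fun i => φ (PresentedGroup.of (Sum.inl i) : PresentedGroup {doubleRel u}),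
      fun i => φ (PresentedGroup.of (Sum.inr i) : PresentedGroup {doubleRel u})), by
    have h := lift_doubleRel u
      (fun i => φ (PresentedGroup.of i : PresentedGroup {doubleRel u}))
    have h2 : FreeGroup.lift (fun i => φ (PresentedGroup.of i : PresentedGroup {doubleRel u})) =
      MonoidHom.comp (show PresentedGroup {doubleRel u} →* Q from φ)
        (PresentedGroup.mk {doubleRel u}) := by
      ext i
      simp
      rfl
    rw [h2, MonoidHom.comp_apply, PresentedGroup.one_of_mem (Set.mem_singleton _), map_one] at h
    exact mul_inv_eq_one.mp h.symm⟩
  invFun p := show PresentedGroup {doubleRel u} →* Q from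
    PresentedGroup.toGroup (f := Sum.elim p.1.1 p.1.2) (by
      rintro _ rfl
      rw [lift_doubleRel, mul_inv_eq_one]
      simpa using p.2)
  left_inv φ := by
    refine PresentedGroup.ext (φ := show PresentedGroup {doubleRel u} →* Q from _)
      (ψ := show PresentedGroup {doubleRel u} →* Q from φ) ?_
    intro x
    refine (PresentedGroup.toGroup.of _).trans ?_
    cases x <;> rfl
  right_inv p := by
    apply Subtype.ext
    apply Prod.ext
    · funext i
      exact PresentedGroup.toGroup.of _
    · funext i
      exact PresentedGroup.toGroup.of _

def pairEquiv {X Q : Type} (f : X → Q) :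
    {p : X × X // f p.1 = f p.2} ≃ Σ g : Q, {x // f x = g} × {x // f x = g} where
  toFun p := ⟨f p.1.2, ⟨p.1.1, p.2⟩, ⟨p.1.2, rfl⟩⟩
  invFun s := ⟨(s.2.1.1, s.2.2.1), s.2.1.2.trans s.2.2.2.symm⟩
  left_inv p := rfl
  right_inv := by
    rintro ⟨g, ⟨x, hx⟩, ⟨y, rfl⟩⟩
    rfl

instance {k : ℕ} (u : FreeGroup (Fin k)) (Q : Type) [Group Q] [Finite Q] :
    Finite (Double u →* Q) := Finite.of_equiv _ (doubleHomEquiv u Q).symm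

lemma card_hom_double {k : ℕ} (u w : FreeGroup (Fin k)) (Q : Type) [Group Q] [Finite Q]
    (h : MeasureEquivIn u w Q) : Nat.card (Double u →* Q) = Nat.card (Double w →* Q) := by
  have := Fintype.ofFinite Q
  rw [Nat.card_congr ((doubleHomEquiv u Q).trans (pairEquiv fun f => FreeGroup.lift f u)),
    Nat.card_congr ((doubleHomEquiv w Q).trans (pairEquiv fun f => FreeGroup.lift f w)),
    Nat.card_sigma, Nat.card_sigma]
  refine Finset.sum_congr rfl (fun g _ => ?_)
  rw [Nat.card_prod, Nat.card_prod, h g]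

/-- If `u` and `w` are measure equivalent in every group of a class `C` of finite groups
closed under subgroups, then for each `P ∈ C` the doubles `F *_u F` and `F *_w F` have the
same number of surjections onto `P`; in particular they have the same quotients in `C`. -/
theorem stmt11 (C : (Q : Type) → [inst : Group Q] → Prop)
    (hCfin : ∀ (Q : Type) [Group Q], C Q → Finite Q)
    (hCsub : ∀ (Q : Type) [Group Q], C Q → ∀ H : Subgroup Q, C H)
    (k : ℕ) (u w : FreeGroup (Fin k))
    (hme : ∀ (Q : Type) [Group Q], C Q → MeasureEquivIn u w Q)
    (P : Type) [Group P] (hP : C P) :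
    Nat.card {f : Double u →* P // Function.Surjective f} =
      Nat.card {f : Double w →* P // Function.Surjective f} ∧
    ((∃ f : Double u →* P, Function.Surjective f) ↔
      (∃ f : Double w →* P, Function.Surjective f)) := by
  have := hCfin P hP
  have := Fintype.ofFinite (Subgroup P)
  have key : Nat.card {f : Double u →* P // Function.Surjective f} =
      Nat.card {f : Double w →* P // Function.Surjective f} := by
    have h := sum_Iic_inj (fun K : Subgroup P => Nat.card {f : Double u →* P // f.range = K})
      (fun K : Subgroup P => Nat.card {f : Double w →* P // f.range = K})
      (fun H => by
        rw [← card_hom_sub, ← card_hom_sub]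
        exact card_hom_double u w H (hme H (hCsub P hP H))) ⊤
    simpa only [MonoidHom.range_eq_top] using h
  refine ⟨key, ?_⟩
  rw [← nonempty_subtype, ← nonempty_subtype]
  have e : ∀ v : FreeGroup (Fin k), Nonempty {f : Double v →* P // Function.Surjective f} ↔
      0 < Nat.card {f : Double v →* P // Function.Surjective f} := fun v =>
    Finite.card_pos_iff.symm
  rw [e, e, key]
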